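/- arXiv:1304.4702 — 2 statements merged into one kernel-verified Lean document; each statement's English description precedes it below -/
import Mathlib

section
/- Let f : ℝ → ℝ be C^∞ on a neighborhood of a point α with f(α) = 0 and f′(α) ≠ 0, and set c₂ = f″(α)/(2 f′(α)), c₃ = f‴(α)/(6 f′(α)), c₄ = f⁗(α)/(24 f′(α)). Define y(x) = x − f(x)/f′(x) and z(x) = y(x) − ((2f(x) − f(y(x)))/(2f(x) − 5f(y(x))))·(f(y(x))/f′(x)). Then, as x → α, the divided difference f[x, z(x)] = (f(x) − f(z(x)))/(x − z(x)) satisfies f[x, z(x)] = f′(α)·[1 + c₂(x−α) + c₃(x−α)² + c₄(x−α)³ + O((x−α)⁴)]. -/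
open Filter Topology Asymptotics

/-- The Newton iterate `y(x) = x − f(x)/f′(x)`. -/
noncomputable def newtonStep (f : ℝ → ℝ) (x : ℝ) : ℝ := x - f x / deriv f x

/-- The second step of Kung's fourth-order family with `β = −1/2`:
`z(x) = y − ((2f(x) − f(y))/(2f(x) − 5f(y)))·(f(y)/f′(x))` where `y = newtonStep f x`. -/
noncomputable def kungStep (f : ℝ → ℝ) (x : ℝ) : ℝ :=
  newtonStep f x -
    ((2 * f x - f (newtonStep f x)) / (2 * f x - 5 * f (newtonStep f x))) *
      (f (newtonStep f x) / deriv f x)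

/-- The first-order divided difference `f[u,v] = (f(u) − f(v))/(u − v)`. -/
noncomputable def divDiff (f : ℝ → ℝ) (u v : ℝ) : ℝ := (f u - f v) / (u - v)

/-!
Write `e = x - α` and `A = f′(α)`. Since `y - α = c₂e² + O(e³)`, the correction `f(y)/f′(x)` is
`(y - α)(1 - 2c₂e + O(e²))`, while the weight is `1 + 2 f(y)/f(x) + O(e²) = 1 + 2c₂e + O(e²)`. The
two first-order terms cancel, so `z - α = O(e⁴)`.

Now let `f(x) - f(α) = e Q(e) + O(eⁿ⁺¹)` be the Taylor expansion and suppose `δ = z - α = O(eⁿ)`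
with `n ≥ 2`. Then `f(z) - f(α) = Aδ + O(δ²)` and `Q(e) = A + O(e)`, so
`f(x) - f(z) - (e - δ) Q(e) = δ (Q(e) - A) + O(eⁿ⁺¹) = O(eⁿ⁺¹)`; dividing by `x - z = e - δ ∼ e`
gives `f[x, z] = Q(e) + O(eⁿ)`.
-/

/-- The weight `(u + βv)/(u + (β − 2)v)` of King's family of two-step methods, evaluated at
`u = f(x)` and `v = f(y)`. -/
noncomputable def kingWeight (β u v : ℝ) : ℝ := (u + β * v) / (u + (β - 2) * v)

/-- A step of King's fourth-order family with parameter `β`: a Newton step to `y`, then the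
correction `f(y)/f′(x)` scaled by `kingWeight`. -/
noncomputable def kingStep (β : ℝ) (f : ℝ → ℝ) (x : ℝ) : ℝ :=
  newtonStep f x -
    kingWeight β (f x) (f (newtonStep f x)) * (f (newtonStep f x) / deriv f x)

/-- The asymptotic error constant `c₂ = f″(α)/(2 f′(α))` of Newton's method at the root `α`. -/
noncomputable def newtonErrorConst (f : ℝ → ℝ) (α : ℝ) : ℝ :=
  iteratedDeriv 2 f α / (2 * deriv f α)

/-- The Taylor polynomial of `f` at `α` of degree `n`, minus its constant term and divided by
`x - α`: the degree `n - 1` polynomial approximating the slope of `f` between `α` and `x`. -/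
noncomputable def taylorQuotient (f : ℝ → ℝ) (n : ℕ) (α x : ℝ) : ℝ :=
  ∑ k ∈ Finset.range n, iteratedDeriv (k + 1) f α / (k + 1).factorial * (x - α) ^ k

section Asymptotics

variable {𝕜 : Type*} [NormedField 𝕜]

theorem isLittleO_pow_sub_pow_sub_of_lt (a : 𝕜) {m n : ℕ} (h : m < n) :
    (fun x => (x - a) ^ n) =o[𝓝 a] fun x => (x - a) ^ m :=
  (isLittleO_pow_pow h).comp_tendsto (tendsto_sub_nhds_zero_iff.2 tendsto_id)

theorem isBigO_pow_sub_pow_sub_of_le (a : 𝕜) {m n : ℕ} (h : m ≤ n) :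
    (fun x => (x - a) ^ n) =O[𝓝 a] fun x => (x - a) ^ m := by
  obtain rfl | hlt := h.eq_or_lt
  · exact isBigO_refl _ _
  · exact (isLittleO_pow_sub_pow_sub_of_lt a hlt).isBigO

theorem tendsto_pow_sub_nhds_zero {a : 𝕜} {l : Filter 𝕜} {n : ℕ} (hl : l ≤ 𝓝 a) (hn : n ≠ 0) :
    Tendsto (fun x => (x - a) ^ n) l (𝓝 0) :=
  (Continuous.tendsto' (by fun_prop) _ _ (by simp [hn])).mono_left hl

theorem tendsto_of_sub_isBigO_pow_sub {z : 𝕜 → 𝕜} {a : 𝕜} {l : Filter 𝕜} {n : ℕ}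
    (hl : l ≤ 𝓝 a) (hn : n ≠ 0) (hz : (fun x => z x - a) =O[l] fun x => (x - a) ^ n) :
    Tendsto z l (𝓝 a) :=
  tendsto_sub_nhds_zero_iff.1 (hz.trans_tendsto (tendsto_pow_sub_nhds_zero hl hn))

theorem isTheta_sub_of_sub_const_mul_isBigO {g : 𝕜 → 𝕜} {a c : 𝕜} {l : Filter 𝕜}
    (hl : l ≤ 𝓝 a) (hc : c ≠ 0)
    (hg : (fun x => g x - c * (x - a)) =O[l] fun x => (x - a) ^ 2) :
    g =Θ[l] fun x => x - a := by
  have hlin : (fun x => c * (x - a)) =Θ[l] fun x => x - a :=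
    (isTheta_refl (fun x => x - a) l).const_mul_left hc
  have hrem : (fun x => g x - c * (x - a)) =o[l] fun x => x - a := by
    simpa only [pow_one] using
      hg.trans_isLittleO ((isLittleO_pow_sub_pow_sub_of_lt a one_lt_two).mono hl)
  simpa [Pi.add_def] using hrem.add_isTheta hlin

theorem isBigO_div_of_tendsto {ι : Type*} {l : Filter ι} {u v g : ι → 𝕜} {c : 𝕜}
    (hu : u =O[l] g) (hv : Tendsto v l (𝓝 c)) (hc : c ≠ 0) :
    (fun x => u x / v x) =O[l] g := by
  simpa only [div_eq_mul_inv, mul_one] using hu.mul ((hv.inv₀ hc).isBigO_one 𝕜)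

theorem isBigO_div_of_isTheta {ι : Type*} {l : Filter ι} {u v g : ι → 𝕜} {n : ℕ}
    (hu : u =O[l] fun x => g x ^ (n + 1)) (hv : v =Θ[l] g) :
    (fun x => u x / v x) =O[l] fun x => g x ^ n := by
  have hcancel : (fun x => g x ^ (n + 1) * (g x)⁻¹) =O[l] fun x => g x ^ n := by
    refine isBigO_of_le l fun x => ?_
    obtain hzero | hne := eq_or_ne (g x) 0
    · simp [hzero]
    · rw [pow_succ, mul_inv_cancel_right₀ hne]
  simpa only [div_eq_mul_inv] using (hu.mul hv.inv.isBigO).trans hcancel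

end Asymptotics

section Taylor

variable {E : Type*} [NormedAddCommGroup E] [NormedSpace ℝ E] {g : ℝ → E} {f : ℝ → ℝ} {α : ℝ}

theorem taylor_isBigO {n : ℕ} (hg : ContDiffAt ℝ (n + 1 : ℕ) g α) :
    (fun x => g x - ∑ k ∈ Finset.range (n + 1),
        ((k.factorial : ℝ)⁻¹ * (x - α) ^ k) • iteratedDeriv k g α)
      =O[𝓝 α] fun x => (x - α) ^ (n + 1) := by
  obtain ⟨s, hs, hgs⟩ := hg.contDiffOn le_rfl (by simp)
  obtain ⟨ε, hε, hball⟩ := Metric.mem_nhds_iff.1 hs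
  have hα : α ∈ Metric.ball α ε := Metric.mem_ball_self hε
  have hnext := (taylor_isLittleO (convex_ball α ε) hα (hgs.mono hball)).isBigO
  simp only [Metric.isOpen_ball.nhdsWithin_eq hα, taylor_within_apply,
    iteratedDerivWithin_of_isOpen Metric.isOpen_ball hα, Finset.sum_range_succ _ (n + 1)] at hnext
  have hlast : (fun x => (((n + 1).factorial : ℝ)⁻¹ * (x - α) ^ (n + 1)) •
      iteratedDeriv (n + 1) g α) =O[𝓝 α] fun x => (x - α) ^ (n + 1) := by
    refine .of_bound (‖((n + 1).factorial : ℝ)⁻¹‖ * ‖iteratedDeriv (n + 1) g α‖)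
      (.of_forall fun x => ?_)
    rw [norm_smul, norm_mul, mul_right_comm]
  exact (hnext.add hlast).congr_left fun x => by abel

theorem sub_tangent_isBigO (hg : ContDiffAt ℝ 2 g α) :
    (fun x => g x - (g α + (x - α) • deriv g α)) =O[𝓝 α] fun x => (x - α) ^ 2 := by
  simpa [Finset.sum_range_succ] using taylor_isBigO (n := 1) hg

theorem sub_quadratic_isBigO_of_root (hf : ContDiffAt ℝ 3 f α) (hroot : f α = 0)
    (hsimple : deriv f α ≠ 0) :
    (fun x => f x - deriv f α * ((x - α) + newtonErrorConst f α * (x - α) ^ 2))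
      =O[𝓝 α] fun x => (x - α) ^ 3 := by
  refine (taylor_isBigO (n := 2) hf).congr_left fun x => ?_
  simp only [Finset.sum_range_succ, Finset.sum_range_zero, iteratedDeriv_zero, iteratedDeriv_one,
    hroot, newtonErrorConst, Nat.factorial, smul_eq_mul]
  field_simp
  norm_num
  ring

theorem deriv_sub_linear_isBigO (hf : ContDiffAt ℝ 3 f α) (hsimple : deriv f α ≠ 0) :
    (fun x => deriv f x - deriv f α * (1 + 2 * newtonErrorConst f α * (x - α)))
      =O[𝓝 α] fun x => (x - α) ^ 2 := by
  have hderiv : ContDiffAt ℝ 2 (deriv f) α := hf.derivWithin (by norm_num)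
  refine (sub_tangent_isBigO hderiv).congr_left fun x => ?_
  rw [newtonErrorConst, iteratedDeriv_succ, iteratedDeriv_one, smul_eq_mul]
  field_simp

theorem continuousAt_deriv (hg : ContDiffAt ℝ 1 g α) : ContinuousAt (deriv g) α :=
  (hg.derivWithin (m := 0) (by norm_num)).continuousAt

end Taylor

section TwoStep

variable {f : ℝ → ℝ} {α : ℝ}

theorem newtonStep_sub_quadratic_isBigO (hf : ContDiffAt ℝ 3 f α) (hroot : f α = 0)
    (hsimple : deriv f α ≠ 0) :
    (fun x => newtonStep f x - α - newtonErrorConst f α * (x - α) ^ 2)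
      =O[𝓝 α] fun x => (x - α) ^ 3 := by
  set c := newtonErrorConst f α
  have hD : Tendsto (deriv f) (𝓝 α) (𝓝 (deriv f α)) := continuousAt_deriv (hf.of_le (by norm_num))
  have hderiv : (fun x => (deriv f x - deriv f α * (1 + 2 * c * (x - α))) * (x - α))
      =O[𝓝 α] fun x => (x - α) ^ 3 :=
    (deriv_sub_linear_isBigO hf hsimple).mul (isBigO_refl _ _)
  have hderiv₀ : (fun x => c * (x - α) ^ 2 * (deriv f x - deriv f α))
      =O[𝓝 α] fun x => (x - α) ^ 3 :=
    ((isBigO_refl _ _).const_mul_left c).mul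
      (((hf.derivWithin (m := 2) (by norm_num)).differentiableAt (by norm_num)).isBigO_sub)
  have hnum := (hderiv.sub (sub_quadratic_isBigO_of_root hf hroot hsimple)).sub hderiv₀
  refine (isBigO_div_of_tendsto hnum hD hsimple).congr' ?_ .rfl
  filter_upwards [hD.eventually_ne hsimple] with x hx
  rw [newtonStep]
  field_simp
  ring

theorem newtonStep_sub_root_isBigO (hf : ContDiffAt ℝ 3 f α) (hroot : f α = 0)
    (hsimple : deriv f α ≠ 0) :
    (fun x => newtonStep f x - α) =O[𝓝 α] fun x => (x - α) ^ 2 := by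
  have hcubic := (newtonStep_sub_quadratic_isBigO hf hroot hsimple).trans
    (isBigO_pow_sub_pow_sub_of_le α (Nat.le_succ 2))
  have hsquare := (isBigO_refl (fun x => (x - α) ^ 2) (𝓝 α)).const_mul_left (newtonErrorConst f α)
  exact (hcubic.add hsquare).congr_left fun x => by ring

theorem comp_newtonStep_sub_linear_isBigO (hf : ContDiffAt ℝ 3 f α) (hroot : f α = 0)
    (hsimple : deriv f α ≠ 0) :
    (fun x => f (newtonStep f x) - deriv f α * (newtonStep f x - α))
      =O[𝓝 α] fun x => (x - α) ^ 4 := by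
  have hy := newtonStep_sub_root_isBigO hf hroot hsimple
  have hy_lim := tendsto_of_sub_isBigO_pow_sub le_rfl two_ne_zero hy
  have htangent := (sub_tangent_isBigO (hf.of_le (by norm_num))).comp_tendsto hy_lim
  simp only [hroot, zero_add, smul_eq_mul, mul_comm _ (deriv f α)] at htangent
  exact (htangent.trans (hy.pow 2)).congr_right fun x => by ring

theorem comp_newtonStep_sub_quadratic_isBigO (hf : ContDiffAt ℝ 3 f α) (hroot : f α = 0)
    (hsimple : deriv f α ≠ 0) :
    (fun x => f (newtonStep f x) - deriv f α * newtonErrorConst f α * (x - α) ^ 2)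
      =O[𝓝 α] fun x => (x - α) ^ 3 := by
  have htangent := (comp_newtonStep_sub_linear_isBigO hf hroot hsimple).trans
    (isBigO_pow_sub_pow_sub_of_le α (Nat.le_succ 3))
  have hnewton :=
    (newtonStep_sub_quadratic_isBigO hf hroot hsimple).const_mul_left (deriv f α)
  exact (htangent.add hnewton).congr_left fun x => by ring

theorem kingWeight_eq_one_add_div {β u v : ℝ} (h : u + (β - 2) * v ≠ 0) :
    kingWeight β u v = 1 + 2 * v / (u + (β - 2) * v) := by
  rw [kingWeight, one_add_div h]
  ring

theorem kingWeight_sub_linear_isBigO (β : ℝ) (hf : ContDiffAt ℝ 3 f α) (hroot : f α = 0)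
    (hsimple : deriv f α ≠ 0) :
    (fun x => kingWeight β (f x) (f (newtonStep f x)) -
        (1 + 2 * newtonErrorConst f α * (x - α)))
      =O[𝓝[≠] α] fun x => (x - α) ^ 2 := by
  set c := newtonErrorConst f α
  have hu : (fun x => f x - deriv f α * (x - α)) =O[𝓝 α] fun x => (x - α) ^ 2 := by
    simpa only [hroot, zero_add, smul_eq_mul, mul_comm _ (deriv f α)] using
      sub_tangent_isBigO (hf.of_le (by norm_num))
  have hv_sub := comp_newtonStep_sub_quadratic_isBigO hf hroot hsimple
  have hv : (fun x => f (newtonStep f x)) =O[𝓝 α] fun x => (x - α) ^ 2 :=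
    ((hv_sub.trans (isBigO_pow_sub_pow_sub_of_le α (Nat.le_succ 2))).add
      ((isBigO_refl _ _).const_mul_left (deriv f α * c))).congr_left fun x => by ring
  have hden : (fun x => f x + (β - 2) * f (newtonStep f x)) =Θ[𝓝[≠] α] fun x => x - α :=
    isTheta_sub_of_sub_const_mul_isBigO nhdsWithin_le_nhds hsimple
      (((hu.add (hv.const_mul_left (β - 2))).congr_left fun x => by ring).mono nhdsWithin_le_nhds)
  have hu_v : (fun x => (x - α) * (f x - deriv f α * (x - α) + (β - 2) * f (newtonStep f x)))
      =O[𝓝 α] fun x => (x - α) ^ 3 :=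
    ((isBigO_refl _ _).mul (hu.add (hv.const_mul_left (β - 2)))).congr_right fun x => by ring
  have hnum : (fun x => 2 * f (newtonStep f x) -
      2 * c * (x - α) * (f x + (β - 2) * f (newtonStep f x))) =O[𝓝 α] fun x => (x - α) ^ 3 :=
    ((hv_sub.const_mul_left 2).sub (hu_v.const_mul_left (2 * c))).congr_left fun x => by ring
  refine (isBigO_div_of_isTheta (hnum.mono nhdsWithin_le_nhds) hden).congr' ?_ .rfl
  filter_upwards [hden.eq_zero_iff, self_mem_nhdsWithin] with x hx hne
  have hden_ne : f x + (β - 2) * f (newtonStep f x) ≠ 0 := mt hx.1 (sub_ne_zero.2 hne)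
  rw [kingWeight_eq_one_add_div hden_ne, sub_div, mul_div_cancel_right₀ _ hden_ne]
  ring

theorem weighted_newtonStep_sub_root_isBigO {w : ℝ → ℝ} (hf : ContDiffAt ℝ 3 f α)
    (hroot : f α = 0) (hsimple : deriv f α ≠ 0)
    (hw : (fun x => w x - (1 + 2 * newtonErrorConst f α * (x - α)))
      =O[𝓝[≠] α] fun x => (x - α) ^ 2) :
    (fun x => newtonStep f x - w x * (f (newtonStep f x) / deriv f x) - α)
      =O[𝓝[≠] α] fun x => (x - α) ^ 4 := by
  have hl : 𝓝[≠] α ≤ 𝓝 α := nhdsWithin_le_nhds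
  have hD : Tendsto (deriv f) (𝓝[≠] α) (𝓝 (deriv f α)) :=
    (continuousAt_deriv (hf.of_le (by norm_num))).tendsto.mono_left hl
  -- Both `w` and `f′(x) / f′(α)` are `1 + 2c₂(x − α) + O((x − α)²)`, whence the order 4.
  have hcancel : (fun x => deriv f x - deriv f α * w x) =O[𝓝[≠] α] fun x => (x - α) ^ 2 :=
    (((deriv_sub_linear_isBigO hf hsimple).mono hl).sub
      (hw.const_mul_left (deriv f α))).congr_left fun x => by ring
  have hw_bdd : w =O[𝓝[≠] α] fun _ => (1 : ℝ) := by
    have hsq := tendsto_pow_sub_nhds_zero hl two_ne_zero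
    have hlin : Tendsto (fun x => 1 + 2 * newtonErrorConst f α * (x - α)) (𝓝[≠] α) (𝓝 1) :=
      (Continuous.tendsto' (by fun_prop) _ _ (by simp)).mono_left hl
    simpa using ((hw.trans_tendsto hsq).add hlin).isBigO_one ℝ
  have hfirst := hcancel.mul ((newtonStep_sub_root_isBigO hf hroot hsimple).mono hl)
  have hsecond := hw_bdd.mul ((comp_newtonStep_sub_linear_isBigO hf hroot hsimple).mono hl)
  simp only [one_mul, ← pow_add] at hfirst hsecond
  refine (isBigO_div_of_tendsto (hfirst.sub hsecond) hD hsimple).congr' ?_ .rfl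
  filter_upwards [hD.eventually_ne hsimple] with x hx
  field_simp
  ring

theorem kingStep_sub_root_isBigO (β : ℝ) (hf : ContDiffAt ℝ 3 f α) (hroot : f α = 0)
    (hsimple : deriv f α ≠ 0) :
    (fun x => kingStep β f x - α) =O[𝓝[≠] α] fun x => (x - α) ^ 4 :=
  weighted_newtonStep_sub_root_isBigO hf hroot hsimple
    (kingWeight_sub_linear_isBigO β hf hroot hsimple)

theorem kungStep_eq_kingStep (f : ℝ → ℝ) : kungStep f = kingStep (-1 / 2) f := by
  funext x
  have hweight (u v : ℝ) : kingWeight (-1 / 2) u v = (2 * u - v) / (2 * u - 5 * v) := by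
    rw [kingWeight, ← mul_div_mul_left _ _ (two_ne_zero (α := ℝ))]
    ring_nf
  rw [kungStep, kingStep, hweight]

end TwoStep

section DividedDifference

variable {f : ℝ → ℝ} {α : ℝ}

theorem sub_taylorQuotient_isBigO {n : ℕ} (hf : ContDiffAt ℝ (n + 1 : ℕ) f α) :
    (fun x => f x - (f α + taylorQuotient f n α x * (x - α)))
      =O[𝓝 α] fun x => (x - α) ^ (n + 1) := by
  refine (taylor_isBigO hf).congr_left fun x => ?_
  have hterm (k : ℕ) : ((k + 1).factorial : ℝ)⁻¹ * (x - α) ^ (k + 1) * iteratedDeriv (k + 1) f α =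
      iteratedDeriv (k + 1) f α / (k + 1).factorial * (x - α) ^ k * (x - α) := by ring
  simp [Finset.sum_range_succ', taylorQuotient, Finset.sum_mul, hterm, add_comm]

theorem taylorQuotient_sub_deriv_isBigO {n : ℕ} (hn : 0 < n) :
    (fun x => taylorQuotient f n α x - deriv f α) =O[𝓝 α] fun x => x - α := by
  have hdiff : DifferentiableAt ℝ (taylorQuotient f n α) α := by
    unfold taylorQuotient
    fun_prop
  have hvalue : taylorQuotient f n α α = deriv f α := by
    obtain ⟨m, rfl⟩ := Nat.exists_eq_succ_of_ne_zero hn.ne'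
    simp [taylorQuotient, Finset.sum_range_succ']
  simpa only [hvalue] using hdiff.isBigO_sub

theorem divDiff_sub_taylorQuotient_isBigO {z : ℝ → ℝ} {n : ℕ} (hn : 2 ≤ n)
    (hf : ContDiffAt ℝ (n + 1 : ℕ) f α)
    (hz : (fun x => z x - α) =O[𝓝[≠] α] fun x => (x - α) ^ n) :
    (fun x => divDiff f x (z x) - taylorQuotient f n α x)
      =O[𝓝[≠] α] fun x => (x - α) ^ n := by
  have hl : 𝓝[≠] α ≤ 𝓝 α := nhdsWithin_le_nhds
  have hfx := (sub_taylorQuotient_isBigO hf).mono hl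
  have hfz : (fun x => f (z x) - (f α + (z x - α) * deriv f α)) =O[𝓝[≠] α]
      fun x => (x - α) ^ (n + 1) := by
    have hz_lim := tendsto_of_sub_isBigO_pow_sub hl (by omega) hz
    have htangent := (sub_tangent_isBigO (hf.of_le (by norm_cast; omega))).comp_tendsto hz_lim
    refine (htangent.trans (hz.pow 2)).trans ?_
    simpa only [← pow_mul] using (isBigO_pow_sub_pow_sub_of_le α (by omega)).mono hl
  have hslope := hz.mul ((taylorQuotient_sub_deriv_isBigO (f := f) (α := α)
    (zero_lt_two.trans_le hn)).mono hl)
  simp only [← pow_succ] at hslope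
  have hden : (fun x => x - z x) =Θ[𝓝[≠] α] fun x => x - α :=
    isTheta_sub_of_sub_const_mul_isBigO hl one_ne_zero
      ((hz.neg_left.trans ((isBigO_pow_sub_pow_sub_of_le α hn).mono hl)).congr_left
        fun x => by ring)
  refine (isBigO_div_of_isTheta ((hfx.sub hfz).add hslope) hden).congr' ?_ .rfl
  filter_upwards [hden.eq_zero_iff, self_mem_nhdsWithin] with x hx hne
  have hden_ne : x - z x ≠ 0 := mt hx.1 (sub_ne_zero.2 hne)
  rw [divDiff]
  field_simp
  ring

end DividedDifference

theorem divDiff_x_z_expansion_general (β : ℝ) (f : ℝ → ℝ) (α : ℝ) (hf : ContDiffAt ℝ 5 f α)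
    (hroot : f α = 0) (hsimple : deriv f α ≠ 0)
    (c₂ c₃ c₄ : ℝ)
    (hc₂ : c₂ = iteratedDeriv 2 f α / (2 * deriv f α))
    (hc₃ : c₃ = iteratedDeriv 3 f α / (6 * deriv f α))
    (hc₄ : c₄ = iteratedDeriv 4 f α / (24 * deriv f α)) :
    (fun x => divDiff f x (kingStep β f x) -
        deriv f α * (1 + c₂ * (x - α) + c₃ * (x - α) ^ 2 + c₄ * (x - α) ^ 3))
      =O[𝓝[≠] α] fun x => (x - α) ^ 4 := by
  have hz := kingStep_sub_root_isBigO β (hf.of_le (by norm_num)) hroot hsimple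
  have hexp := divDiff_sub_taylorQuotient_isBigO (n := 4) (by norm_num) hf hz
  refine hexp.congr_left fun x => ?_
  simp only [taylorQuotient, Finset.sum_range_succ, Finset.sum_range_zero, Nat.factorial,
    hc₂, hc₃, hc₄]
  field_simp
  norm_num
  ring

theorem divDiff_x_z_expansion (f : ℝ → ℝ) (α : ℝ)
    (hf : ∃ s ∈ 𝓝 α, ContDiffOn ℝ (⊤ : ℕ∞) f s)
    (hroot : f α = 0) (hsimple : deriv f α ≠ 0)
    (c₂ c₃ c₄ : ℝ)
    (hc₂ : c₂ = iteratedDeriv 2 f α / (2 * deriv f α))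
    (hc₃ : c₃ = iteratedDeriv 3 f α / (6 * deriv f α))
    (hc₄ : c₄ = iteratedDeriv 4 f α / (24 * deriv f α)) :
    (fun x => divDiff f x (kungStep f x) -
        deriv f α * (1 + c₂ * (x - α) + c₃ * (x - α) ^ 2 + c₄ * (x - α) ^ 3))
      =O[𝓝[≠] α] fun x => (x - α) ^ 4 := by
  obtain ⟨s, hs, hfs⟩ := hf
  rw [kungStep_eq_kingStep]
  exact divDiff_x_z_expansion_general (-1 / 2) f α
    (contDiffAt_infty.1 (hfs.contDiffAt hs) 5) hroot hsimple c₂ c₃ c₄ hc₂ hc₃ hc₄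
end

section
/- Let f : ℝ → ℝ be C^∞ on a neighborhood of a point α with f(α) = 0 and f′(α) ≠ 0, and set c₂ = f″(α)/(2 f′(α)), c₃ = f‴(α)/(6 f′(α)), c₄ = f⁗(α)/(24 f′(α)). Consider the three-step iteration function Φ defined by: y(x) = x − f(x)/f′(x); z(x) = y(x) − ((2f(x) − f(y(x)))/(2f(x) − 5f(y(x))))·(f(y(x))/f′(x)); and Φ(x) = z(x) − f(z(x))/D(x), where D(x) = 2 f[x, z(x)] + f[y(x), z(x)] − f[x, y(x)] + (x − z(x))·f[y(x), x, x] − f′(x) is the Hermite-interpolation approximation to f′(z(x)). Then the method has local order of convergence eight; more precisely, as x → α, Φ(x) − α = (c₂³c₃² − c₂²c₃c₄)(x−α)⁸ + O((x−α)⁹). -/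
open Filter Topology Asymptotics

/-- The second-order divided difference with repeated node `v`:
`f[u,v,v] = (f[u,v] − f′(v))/(u − v)`. -/
noncomputable def divDiff2 (f : ℝ → ℝ) (u v : ℝ) : ℝ :=
  (divDiff f u v - deriv f v) / (u - v)

/-- The Hermite-interpolation approximation to `f′(z(x))`:
`D(x) = 2 f[x,z] + f[y,z] − f[x,y] + (x−z)·f[y,x,x] − f′(x)`. -/
noncomputable def hermiteDerivApprox (f : ℝ → ℝ) (x : ℝ) : ℝ :=
  2 * divDiff f x (kungStep f x) + divDiff f (newtonStep f x) (kungStep f x) -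
    divDiff f x (newtonStep f x) +
    (x - kungStep f x) * divDiff2 f (newtonStep f x) x - deriv f x

/-- The three-step eighth-order iteration function `Φ(x) = z(x) − f(z(x))/D(x)`. -/
noncomputable def eighthOrderStep (f : ℝ → ℝ) (x : ℝ) : ℝ :=
  kungStep f x - f (kungStep f x) / hermiteDerivApprox f x

/-!
Write `e = x - α`, `Z = z - α` and `a = f′(α)`. All Taylor remainders are kept as functions
continuous at `α`, so that the errors of the first two steps factor:
`y - α = e² (c₂ + O(e))` and `Z = (y - α) e² (-c₃ + O(e)) = -c₂ c₃ e⁴ + O(e⁵)`.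
In particular `x`, `y`, `z` are distinct near `α` unless `z = α`, where `Φ(x) = z` is exact.

When they are distinct, `D` is the slope at `z` of the cubic interpolant with double node `x` and
nodes `y`, `z`. Adding a multiple of `(t - x)² (t - y) (t - z)` to make the slope at `z` exact and
applying Rolle's theorem four times gives
`D = f′(z) - f⁗(ξ)/4! (z - x)² (z - y)`, so `D = a (1 + 2 c₂ Z + c₂ c₄ e⁴ + O(e⁵))`. Since
`f(z) = a Z (1 + c₂ Z + O(Z²))`, it follows that
`Φ - α = Z (D/a - 1 - c₂ Z + O(e⁵)) = -c₂ c₃ e⁴ (c₂ c₄ - c₂² c₃) e⁴ + O(e⁹)`.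
-/

open Set Polynomial
open scoped Nat

theorem exists_finset_deriv_eq_zero {g : ℝ → ℝ} {s : Set ℝ} (hs : s.OrdConnected)
    (hg : ContinuousOn g s) {S : Finset ℝ} {n : ℕ} (hSs : ↑S ⊆ s) (hS : ∀ t ∈ S, g t = 0)
    (hcard : n + 1 ≤ S.card) :
    ∃ T : Finset ℝ, ↑T ⊆ s ∧ Disjoint T S ∧ (∀ t ∈ T, deriv g t = 0) ∧ n ≤ T.card := by
  rcases (({t ∈ s | deriv g t = 0} : Set ℝ) \ S).finite_or_infinite with hfin | hinf
  · refine ⟨hfin.toFinset, fun t ht => (hfin.mem_toFinset.1 ht).1.1, ?_,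
      fun t ht => (hfin.mem_toFinset.1 ht).1.2, ?_⟩
    · rw [Finset.disjoint_left]
      simp
    · have hinterleave : S.card ≤ (hfin.toFinset \ S).card + 1 := by
        refine Finset.card_le_sdiff_of_interleaved fun a ha b hb hab hgap => ?_
        have hsub : Icc a b ⊆ s := hs.out (hSs ha) (hSs hb)
        obtain ⟨c, hc, hc0⟩ :=
          exists_deriv_eq_zero hab (hg.mono hsub) ((hS a ha).trans (hS b hb).symm)
        have hcS : c ∉ S := fun h => hgap c h hc
        exact ⟨c, by simpa [hc0, hcS] using hsub (Ioo_subset_Icc_self hc), hc⟩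
      have := Finset.card_le_card (Finset.sdiff_subset : hfin.toFinset \ S ⊆ hfin.toFinset)
      omega
  · obtain ⟨T, hT, hTcard⟩ := hinf.exists_subset_card_eq n
    exact ⟨T, fun t ht => (hT ht).1.1, Finset.disjoint_left.2 fun t ht => (hT ht).2,
      fun t ht => (hT ht).1.2, hTcard.ge⟩

theorem exists_iteratedDeriv_eq_zero {n : ℕ} {g : ℝ → ℝ} {s : Set ℝ} (hs : s.OrdConnected)
    (hg : ∀ t ∈ s, ContDiffAt ℝ n g t) {S : Finset ℝ} (hSs : ↑S ⊆ s) (hS : ∀ t ∈ S, g t = 0)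
    (hcard : n + 1 ≤ S.card) : ∃ ξ ∈ s, iteratedDeriv n g ξ = 0 := by
  induction n generalizing g S with
  | zero =>
    obtain ⟨t, ht⟩ := Finset.card_pos.1 (Nat.lt_of_lt_of_le one_pos hcard)
    exact ⟨t, hSs ht, by simpa using hS t ht⟩
  | succ n ih =>
    obtain ⟨T, hTs, -, hT, hTcard⟩ := exists_finset_deriv_eq_zero hs
      (fun t ht => (hg t ht).continuousAt.continuousWithinAt) hSs hS hcard
    simp only [iteratedDeriv_succ']
    exact ih (fun t ht => (hg t ht).derivWithin (by norm_cast)) hTs hT hTcard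

theorem exists_iteratedDeriv_eq_zero_of_double_zeros {n : ℕ} {g : ℝ → ℝ} {s : Set ℝ}
    (hs : s.OrdConnected) (hg : ∀ t ∈ s, ContDiffAt ℝ (n + 1) g t) {S D : Finset ℝ}
    (hSs : ↑S ⊆ s) (hS : ∀ t ∈ S, g t = 0) (hDS : D ⊆ S) (hD : ∀ t ∈ D, deriv g t = 0)
    (hcard : n + 2 ≤ S.card + D.card) : ∃ ξ ∈ s, iteratedDeriv (n + 1) g ξ = 0 := by
  rcases S.eq_empty_or_nonempty with rfl | hne
  · simp [Finset.subset_empty.1 hDS] at hcard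
  obtain ⟨T, hTs, hTS, hT, hTcard⟩ := exists_finset_deriv_eq_zero (n := S.card - 1) hs
    (fun t ht => (hg t ht).continuousAt.continuousWithinAt) hSs hS
    (Nat.sub_add_cancel hne.card_pos).le
  simp only [iteratedDeriv_succ']
  refine exists_iteratedDeriv_eq_zero (S := T ∪ D) hs
    (fun t ht => (hg t ht).derivWithin le_rfl) ?_ ?_ ?_
  · rw [Finset.coe_union]
    exact union_subset hTs ((Finset.coe_subset.2 hDS).trans hSs)
  · exact fun t ht => (Finset.mem_union.1 ht).elim (hT t) (hD t)
  · have := hne.card_pos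
    rw [Finset.card_union_of_disjoint (hTS.mono_right hDS)]
    omega

theorem iteratedDeriv_polynomial_eval (p : ℝ[X]) (n : ℕ) (t : ℝ) :
    iteratedDeriv n (fun t => p.eval t) t = (derivative^[n] p).eval t := by
  induction n generalizing p with
  | zero => simp
  | succ n ih =>
    have hderiv : deriv (fun t => p.eval t) = fun t => p.derivative.eval t :=
      funext fun _ => p.deriv
    rw [iteratedDeriv_succ', hderiv, ih, Function.iterate_succ_apply]

theorem iteratedDeriv_polynomial_eval_of_natDegree_le {p : ℝ[X]} {n : ℕ} (hp : p.natDegree ≤ n)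
    (t : ℝ) : iteratedDeriv n (fun t => p.eval t) t = n ! * p.coeff n := by
  have hconst : (derivative^[n] p).natDegree = 0 := by
    have := natDegree_iterate_derivative p n
    omega
  rw [iteratedDeriv_polynomial_eval, eq_C_of_natDegree_eq_zero hconst, eval_C,
    coeff_iterate_derivative]
  simp [Nat.descFactorial_self]

theorem exists_iteratedDeriv_eq_of_hermite_interpolation {n : ℕ} {f : ℝ → ℝ} {s : Set ℝ}
    (hs : s.OrdConnected) (hf : ∀ t ∈ s, ContDiffAt ℝ (n + 1) f t) {p : ℝ[X]}
    (hp : p.natDegree ≤ n + 1)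
    {S D : Finset ℝ} (hSs : ↑S ⊆ s) (hS : ∀ t ∈ S, p.eval t = f t) (hDS : D ⊆ S)
    (hD : ∀ t ∈ D, p.derivative.eval t = deriv f t) (hcard : n + 2 ≤ S.card + D.card) :
    ∃ ξ ∈ s, iteratedDeriv (n + 1) f ξ = (n + 1)! * p.coeff (n + 1) := by
  have hpdiff (t : ℝ) : ContDiffAt ℝ (n + 1) (fun t => p.eval t) t := by
    simpa using (p.contDiff_aeval (𝕜 := ℝ) (n + 1)).contDiffAt (x := t)
  obtain ⟨ξ, hξs, hξ⟩ := exists_iteratedDeriv_eq_zero_of_double_zeros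
    (g := fun t => f t - p.eval t) hs (fun t ht => (hf t ht).sub (hpdiff t)) hSs
    (fun t ht => by rw [hS t ht, sub_self]) hDS
    (fun t ht => by
      rw [deriv_fun_sub ((hf t (hSs (hDS ht))).differentiableAt (by simp)) p.differentiableAt,
        p.deriv, hD t ht, sub_self]) hcard
  refine ⟨ξ, hξs, ?_⟩
  rwa [iteratedDeriv_fun_sub (mod_cast hf ξ hξs) (mod_cast hpdiff ξ),
    iteratedDeriv_polynomial_eval_of_natDegree_le hp, sub_eq_zero] at hξ

/-- The slope at `z` of the cubic interpolating `f` at `x`, `y`, `z` and `f′` at `x`, written out in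
divided differences so that `hermiteDerivApprox f x` is by definition its value at the nodes
`x`, `newtonStep f x`, `kungStep f x`. -/
noncomputable def hermiteDeriv (f : ℝ → ℝ) (x y z : ℝ) : ℝ :=
  2 * divDiff f x z + divDiff f y z - divDiff f x y + (x - z) * divDiff2 f y x - deriv f x

theorem hermiteDeriv_eq_of_newton_form {f : ℝ → ℝ} {x y z A B : ℝ} (hxy : x ≠ y) (hxz : x ≠ z)
    (hyz : y ≠ z) (hA : f y = f x + deriv f x * (y - x) + A * (y - x) ^ 2)
    (hB : f z = f x + deriv f x * (z - x) + A * (z - x) ^ 2 + B * ((z - x) ^ 2 * (z - y))) :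
    hermiteDeriv f x y z =
      deriv f x + 2 * A * (z - x) + B * ((z - x) ^ 2 + 2 * (z - x) * (z - y)) := by
  have hyx : y - x ≠ 0 := sub_ne_zero.2 hxy.symm
  have hdiv_xz : divDiff f x z = deriv f x + A * (z - x) + B * ((z - x) * (z - y)) := by
    rw [divDiff, hB, div_eq_iff (sub_ne_zero.2 hxz)]
    ring
  have hdiv_xy : divDiff f x y = deriv f x + A * (y - x) := by
    rw [divDiff, hA, div_eq_iff (sub_ne_zero.2 hxy)]
    ring
  have hdiv_yz : divDiff f y z = deriv f x + A * (z + y - 2 * x) + B * (z - x) ^ 2 := by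
    rw [divDiff, hA, hB, div_eq_iff (sub_ne_zero.2 hyz)]
    ring
  have hdiv_yxx : divDiff2 f y x = A := by
    rw [divDiff2, divDiff, hA, div_eq_iff hyx, sub_eq_iff_eq_add, div_eq_iff hyx]
    ring
  rw [hermiteDeriv, hdiv_xz, hdiv_xy, hdiv_yz, hdiv_yxx]
  ring

theorem exists_cubic_hermite_interpolation (f : ℝ → ℝ) {x y z : ℝ} (hxy : x ≠ y) (hxz : x ≠ z)
    (hyz : y ≠ z) :
    ∃ p : ℝ[X], p.natDegree ≤ 3 ∧ p.eval x = f x ∧ p.eval y = f y ∧ p.eval z = f z ∧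
      p.derivative.eval x = deriv f x ∧ p.derivative.eval z = hermiteDeriv f x y z := by
  have hzx : z - x ≠ 0 := sub_ne_zero.2 hxz.symm
  have hzy : z - y ≠ 0 := sub_ne_zero.2 hyz.symm
  have hyx : y - x ≠ 0 := sub_ne_zero.2 hxy.symm
  obtain ⟨A, hA⟩ : ∃ A, f y = f x + deriv f x * (y - x) + A * (y - x) ^ 2 :=
    ⟨(f y - f x - deriv f x * (y - x)) / (y - x) ^ 2, by field_simp; ring⟩
  obtain ⟨B, hB⟩ : ∃ B, f z = f x + deriv f x * (z - x) + A * (z - x) ^ 2 +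
      B * ((z - x) ^ 2 * (z - y)) :=
    ⟨(f z - f x - deriv f x * (z - x) - A * (z - x) ^ 2) / ((z - x) ^ 2 * (z - y)), by
      field_simp; ring⟩
  refine ⟨C (f x) + C (deriv f x) * (X - C x) + C A * ((X - C x) * (X - C x)) +
    C B * ((X - C x) * (X - C x) * (X - C y)), by compute_degree, by simp, ?_, ?_, by simp, ?_⟩
  · simp only [eval_add, eval_mul, eval_sub, eval_C, eval_X]
    linear_combination -hA
  · simp only [eval_add, eval_mul, eval_sub, eval_C, eval_X]
    linear_combination -hB
  · rw [hermiteDeriv_eq_of_newton_form hxy hxz hyz hA hB]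
    simp only [derivative_add, derivative_mul, derivative_sub, derivative_C, derivative_X,
      eval_add, eval_mul, eval_sub, eval_C, eval_X, eval_one, eval_zero]
    ring

theorem exists_hermiteDeriv_eq {f : ℝ → ℝ} {s : Set ℝ} (hs : s.OrdConnected)
    (hf : ∀ t ∈ s, ContDiffAt ℝ 4 f t) {x y z : ℝ} (hx : x ∈ s) (hy : y ∈ s) (hz : z ∈ s)
    (hxy : x ≠ y) (hxz : x ≠ z) (hyz : y ≠ z) :
    ∃ ξ ∈ s, hermiteDeriv f x y z =
      deriv f z - iteratedDeriv 4 f ξ / 4! * ((z - x) ^ 2 * (z - y)) := by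
  obtain ⟨p, hdeg, hpx, hpy, hpz, hpx', hpz'⟩ := exists_cubic_hermite_interpolation f hxy hxz hyz
  have hzx : z - x ≠ 0 := sub_ne_zero.2 hxz.symm
  have hzy : z - y ≠ 0 := sub_ne_zero.2 hyz.symm
  obtain ⟨K, hK⟩ : ∃ K, deriv f z - hermiteDeriv f x y z = K * ((z - x) ^ 2 * (z - y)) :=
    ⟨_, (div_mul_cancel₀ _ (mul_ne_zero (pow_ne_zero 2 hzx) hzy)).symm⟩
  -- The quartic through the same data that also has the exact slope at `z`.
  set q : ℝ[X] := p + C K * ((X - C x) * (X - C x) * (X - C y) * (X - C z)) with hq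
  have hqdeg : q.natDegree ≤ 4 := by
    rw [hq]
    compute_degree!
    exact hdeg.trans (by norm_num)
  have hqcoeff : q.coeff 4 = K := by
    rw [hq, coeff_add, coeff_eq_zero_of_natDegree_lt (Nat.lt_succ_of_le hdeg), zero_add]
    compute_degree!
  have hqx' : q.derivative.eval x = deriv f x := by simp [hq, hpx']
  have hqz' : q.derivative.eval z = deriv f z := by
    simp only [hq, derivative_add, derivative_mul, derivative_C, derivative_sub, derivative_X,
      eval_add, eval_mul, eval_C, eval_sub, eval_X, eval_one, eval_zero, hpz']
    linear_combination -hK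
  obtain ⟨ξ, hξs, hξ⟩ := exists_iteratedDeriv_eq_of_hermite_interpolation (n := 3) (f := f) (p := q)
    (S := {x, y, z}) (D := {x, z}) hs (mod_cast hf) hqdeg (by simp [insert_subset_iff, hx, hy, hz])
    (by simp [hq, hpx, hpy, hpz]) (by grind)
    (by simp [hqx', hqz']) (by simp [hxy, hxz, hyz])
  refine ⟨ξ, hξs, ?_⟩
  rw [hξ, hqcoeff, mul_div_cancel_left₀ _ (mod_cast Nat.factorial_ne_zero 4)]
  linear_combination -hK

theorem exists_continuousAt_taylor {n : ℕ} {f : ℝ → ℝ} {α : ℝ} (hf : ContDiffAt ℝ n f α) :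
    ∃ r : ℝ → ℝ, ContinuousAt r α ∧ ∀ x,
      f x = ∑ k ∈ Finset.range n, iteratedDeriv k f α / k ! * (x - α) ^ k + (x - α) ^ n * r x := by
  obtain ⟨u, hu, hfu⟩ := hf.contDiffOn le_rfl (by simp)
  obtain ⟨δ, hδ, hball⟩ := Metric.mem_nhds_iff.1 hu
  have hα : α ∈ Metric.ball α δ := Metric.mem_ball_self hδ
  set P : ℝ → ℝ := fun x => ∑ k ∈ Finset.range n, iteratedDeriv k f α / k ! * (x - α) ^ k with hP
  set c : ℝ := iteratedDeriv n f α / n ! with hc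
  have htaylor (x : ℝ) :
      taylorWithinEval f n (Metric.ball α δ) α x = P x + c * (x - α) ^ n := by
    rw [taylor_within_apply, Finset.sum_range_succ]
    simp only [iteratedDerivWithin_of_isOpen Metric.isOpen_ball hα, smul_eq_mul, hP, hc]
    congr 1
    · exact Finset.sum_congr rfl fun k _ => by ring
    · ring
  refine ⟨Function.update (fun x => (f x - P x) / (x - α) ^ n) α c, ?_, fun x => ?_⟩
  · rw [continuousAt_update_same]
    have hlim := (Real.taylor_tendsto (convex_ball α δ) hα (hfu.mono hball)).add_const c
    rw [Metric.isOpen_ball.nhdsWithin_eq hα, zero_add] at hlim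
    refine (hlim.mono_left nhdsWithin_le_nhds).congr' ?_
    filter_upwards [self_mem_nhdsWithin] with x hx
    have : (x - α) ^ n ≠ 0 := pow_ne_zero n (sub_ne_zero.2 hx)
    rw [htaylor]
    field_simp
    ring
  · rcases eq_or_ne x α with rfl | hx
    · have := htaylor x
      rw [taylorWithinEval_self] at this
      rw [Function.update_self, this, mul_comm c]
    · rw [Function.update_of_ne hx, mul_div_cancel₀ _ (pow_ne_zero n (sub_ne_zero.2 hx))]
      ring

/-- `α` is a root of `f` with nonzero slope `a`, and `f`, `f′` have the expansions at `α` with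
normalised coefficients `c₂`, `c₃`. The coefficients of the remainders are functions continuous at
`α` and the expansions hold at every point, so that further points can be substituted into them. -/
structure HasSimpleRootExpansion (f : ℝ → ℝ) (α a c₂ c₃ : ℝ) : Prop where
  ne_zero : a ≠ 0
  expansion : ∃ r : ℝ → ℝ, ContinuousAt r α ∧ ∀ x,
    f x = a * ((x - α) + c₂ * (x - α) ^ 2 + c₃ * (x - α) ^ 3 + (x - α) ^ 4 * r x)
  deriv_expansion : ∃ r' : ℝ → ℝ, ContinuousAt r' α ∧ ∀ x,
    deriv f x = a * (1 + 2 * c₂ * (x - α) + 3 * c₃ * (x - α) ^ 2 + (x - α) ^ 3 * r' x)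

theorem hasSimpleRootExpansion_of_contDiffAt {f : ℝ → ℝ} {α : ℝ} (hf : ContDiffAt ℝ 4 f α)
    (hroot : f α = 0) (hsimple : deriv f α ≠ 0) :
    HasSimpleRootExpansion f α (deriv f α) (iteratedDeriv 2 f α / (2 * deriv f α))
      (iteratedDeriv 3 f α / (6 * deriv f α)) := by
  obtain ⟨r, hr, hfr⟩ := exists_continuousAt_taylor (n := 4) (mod_cast hf)
  obtain ⟨r', hr', hfr'⟩ := exists_continuousAt_taylor (n := 3)
    (f := deriv f) (hf.derivWithin (m := 3) (by norm_num))
  refine ⟨hsimple, ⟨fun x => r x / deriv f α, hr.div_const _, fun x => ?_⟩,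
    ⟨fun x => r' x / deriv f α, hr'.div_const _, fun x => ?_⟩⟩
  · rw [hfr]
    simp only [Finset.sum_range_succ, Finset.sum_range_zero, iteratedDeriv_zero, iteratedDeriv_one,
      hroot, Nat.factorial]
    push_cast
    field_simp
    ring
  · rw [hfr']
    simp only [Finset.sum_range_succ, Finset.sum_range_zero, ← iteratedDeriv_succ',
      zero_add, iteratedDeriv_one, Nat.factorial]
    push_cast
    field_simp
    ring

namespace HasSimpleRootExpansion

variable {f : ℝ → ℝ} {α a c₂ c₃ : ℝ}

theorem apply_eq_zero (h : HasSimpleRootExpansion f α a c₂ c₃) : f α = 0 := by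
  obtain ⟨r, -, hf⟩ := h.expansion
  simp [hf]

theorem eventually_ne_zero (h : HasSimpleRootExpansion f α a c₂ c₃) :
    ∀ᶠ x in 𝓝[≠] α, f x ≠ 0 := by
  obtain ⟨r, hr, hf⟩ := h.expansion
  have hF : ContinuousAt
      (fun x => 1 + c₂ * (x - α) + c₃ * (x - α) ^ 2 + (x - α) ^ 3 * r x) α := by fun_prop
  filter_upwards [(hF.eventually_ne (by simp : _ ≠ (0 : ℝ))).filter_mono nhdsWithin_le_nhds,
    self_mem_nhdsWithin] with x hFx hx
  have hfx : f x = a * (x - α) * (1 + c₂ * (x - α) + c₃ * (x - α) ^ 2 + (x - α) ^ 3 * r x) := by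
    rw [hf]
    ring
  rw [hfx]
  exact mul_ne_zero (mul_ne_zero h.ne_zero (sub_ne_zero.2 hx)) hFx

theorem eventually_deriv_ne_zero (h : HasSimpleRootExpansion f α a c₂ c₃) :
    ∀ᶠ x in 𝓝 α, deriv f x ≠ 0 := by
  obtain ⟨r', hr', hf'⟩ := h.deriv_expansion
  have hcont : ContinuousAt (deriv f) α := by
    rw [funext hf']
    fun_prop
  exact hcont.eventually_ne (by simpa [hf'] using h.ne_zero)

theorem exists_apply_add (h : HasSimpleRootExpansion f α a c₂ c₃) {u : ℝ → ℝ}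
    (hu : ContinuousAt u α) (hu0 : u α = 0) :
    ∃ r : ℝ → ℝ, ContinuousAt r α ∧ ∀ x,
      f (α + u x) = a * (u x + c₂ * u x ^ 2 + c₃ * u x ^ 3 + u x ^ 4 * r x) := by
  obtain ⟨r, hr, hf⟩ := h.expansion
  exact ⟨fun x => r (α + u x), hr.comp_of_eq (by fun_prop) (by simp [hu0]), fun x => by simp [hf]⟩

theorem exists_deriv_add (h : HasSimpleRootExpansion f α a c₂ c₃) {u : ℝ → ℝ}
    (hu : ContinuousAt u α) (hu0 : u α = 0) :
    ∃ r' : ℝ → ℝ, ContinuousAt r' α ∧ ∀ x,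
      deriv f (α + u x) = a * (1 + 2 * c₂ * u x + 3 * c₃ * u x ^ 2 + u x ^ 3 * r' x) := by
  obtain ⟨r', hr', hf'⟩ := h.deriv_expansion
  exact ⟨fun x => r' (α + u x), hr'.comp_of_eq (by fun_prop) (by simp [hu0]),
    fun x => by simp [hf']⟩

theorem exists_newtonStep_sub (h : HasSimpleRootExpansion f α a c₂ c₃) :
    ∃ w : ℝ → ℝ, ContinuousAt w α ∧ ∀ᶠ x in 𝓝 α,
      newtonStep f x - α = (x - α) ^ 2 * (c₂ + (x - α) * w x) := by
  obtain ⟨r, hr, hf⟩ := h.expansion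
  obtain ⟨r', hr', hf'⟩ := h.deriv_expansion
  set G : ℝ → ℝ :=
    fun x => 1 + 2 * c₂ * (x - α) + 3 * c₃ * (x - α) ^ 2 + (x - α) ^ 3 * r' x with hG
  have hGcont : ContinuousAt G α := by fun_prop
  have hGα : G α ≠ 0 := by simp [hG]
  -- The remainder is `f′(x) (x - y) = f(x)` solved for `(y - α - c₂ (x - α)²) / (x - α)³`.
  refine ⟨fun x => (2 * c₃ - 2 * c₂ ^ 2 + (x - α) * (r' x - r x - 3 * c₂ * c₃) -
    (x - α) ^ 2 * (c₂ * r' x)) / G x, by fun_prop (disch := assumption), ?_⟩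
  filter_upwards [hGcont.eventually_ne hGα] with x hGx
  have ha := h.ne_zero
  have hfx' : deriv f x = a * G x := hf' x
  rw [newtonStep, hfx', hf x]
  field_simp
  simp only [hG]
  ring

theorem exists_apply_newtonStep (h : HasSimpleRootExpansion f α a c₂ c₃) {W : ℝ → ℝ}
    (hW : ContinuousAt W α) (hy : ∀ᶠ x in 𝓝 α, newtonStep f x - α = (x - α) ^ 2 * W x) :
    ∃ σ : ℝ → ℝ, ContinuousAt σ α ∧ ∀ᶠ x in 𝓝 α, f (newtonStep f x) =
      f x * ((x - α) * W x * (1 - (x - α) * W x + (x - α) ^ 2 * (c₃ + (x - α) * σ x))) := by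
  obtain ⟨r, hr, hf⟩ := h.expansion
  obtain ⟨r', hr', hf'⟩ := h.deriv_expansion
  obtain ⟨ry, hry, hfy⟩ := h.exists_apply_add (u := fun x => (x - α) ^ 2 * W x) (by fun_prop)
    (by simp)
  have ha := h.ne_zero
  set F : ℝ → ℝ := fun x => 1 + c₂ * (x - α) + c₃ * (x - α) ^ 2 + (x - α) ^ 3 * r x with hF
  have hFcont : ContinuousAt F α := by fun_prop
  have hFα : F α ≠ 0 := by simp [hF]
  refine ⟨fun x => ((x - α) * c₃ * W x ^ 2 + (x - α) ^ 3 * W x ^ 3 * ry x -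
    (2 * r x - r' x + c₂ * c₃ + 2 * c₃ * W x) - (x - α) * (c₃ ^ 2 + (r' x - r x) * W x) -
    (x - α) ^ 2 * c₃ * r x) / F x, by fun_prop (disch := assumption), ?_⟩
  filter_upwards [hy, hFcont.eventually_ne hFα, h.eventually_deriv_ne_zero] with x hyx hFx hfx'
  rcases eq_or_ne x α with rfl | hx
  · simp [newtonStep, h.apply_eq_zero]
  have he : x - α ≠ 0 := sub_ne_zero.2 hx
  -- The equation `f′(x) (x - y) = f(x)` divided by `a (x - α)²`.
  have hnewton : W x * (1 + 2 * c₂ * (x - α) + 3 * c₃ * (x - α) ^ 2 + (x - α) ^ 3 * r' x) =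
      c₂ + 2 * c₃ * (x - α) + (x - α) ^ 2 * (r' x - r x) := by
    have hquot : f x = (x - α - (x - α) ^ 2 * W x) * deriv f x := by
      rw [← hyx, newtonStep]
      field_simp
      ring
    rw [hf, hf'] at hquot
    refine mul_left_cancel₀ (mul_ne_zero ha (pow_ne_zero 2 he)) ?_
    linear_combination hquot
  have hfx : f x = a * (x - α) * F x := by
    rw [hf x]
    ring
  rw [eq_add_of_sub_eq' hyx, hfy, hfx]
  field_simp
  simp only [hF]
  linear_combination (x - α) * W x * hnewton

theorem exists_kungStep_sub (h : HasSimpleRootExpansion f α a c₂ c₃) {W : ℝ → ℝ}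
    (hW : ContinuousAt W α) (hy : ∀ᶠ x in 𝓝 α, newtonStep f x - α = (x - α) ^ 2 * W x) :
    ∃ v : ℝ → ℝ, ContinuousAt v α ∧ ∀ᶠ x in 𝓝 α,
      kungStep f x - α = (newtonStep f x - α) * ((x - α) ^ 2 * (-c₃ + (x - α) * v x)) := by
  obtain ⟨σ, hσ, hfy⟩ := h.exists_apply_newtonStep hW hy
  set q : ℝ → ℝ := fun x =>
    (x - α) * W x * (1 - (x - α) * W x + (x - α) ^ 2 * (c₃ + (x - α) * σ x)) with hq
  set B : ℝ → ℝ := fun x => 2 - 5 * q x with hB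
  set S : ℝ → ℝ := fun x => c₃ + (x - α) * σ x with hS
  set d : ℝ → ℝ := fun x => (x - α) * S x - W x with hd
  have hBcont : ContinuousAt B α := by fun_prop
  have hBα : B α ≠ 0 := by simp [hB, hq]
  refine ⟨fun x => (-2 * σ x - W x * S x + W x * d x ^ 2 - 2 * W x ^ 2 * d x -
    (x - α) * W x ^ 2 * d x ^ 2 - 5 * c₃ * W x * (1 + (x - α) * d x)) / B x,
    by fun_prop (disch := assumption), ?_⟩
  filter_upwards [hy, hfy, hBcont.eventually_ne hBα,
    eventually_nhdsWithin_iff.1 h.eventually_ne_zero] with x hyx hfyx hBx hfx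
  rcases eq_or_ne x α with rfl | hx
  · simp [kungStep, newtonStep, h.apply_eq_zero]
  replace hfyx : f (newtonStep f x) = f x * q x := hfyx
  have hweight : (2 * f x - f (newtonStep f x)) / (2 * f x - 5 * f (newtonStep f x)) =
      (2 - q x) / B x := by
    rw [hfyx, ← mul_div_mul_left _ (B x) (hfx hx)]
    ring
  have hstep : f (newtonStep f x) / deriv f x = q x * (x - α - (x - α) ^ 2 * W x) := by
    rw [hfyx, ← hyx, newtonStep]
    ring
  rw [kungStep, hweight, hstep, sub_right_comm, hyx]
  field_simp
  simp only [hB, hq, hd, hS]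
  ring

end HasSimpleRootExpansion

theorem isBigO_one_add_mul {A B μ : ℝ → ℝ} {α : ℝ} (hA : ContinuousAt A α)
    (hB : ContinuousAt B α) (hμ : μ =O[𝓝[≠] α] (1 : ℝ → ℝ)) :
    (fun x => A x + B x * μ x) =O[𝓝[≠] α] (1 : ℝ → ℝ) := by
  have hA1 : A =O[𝓝[≠] α] (1 : ℝ → ℝ) := (hA.tendsto.mono_left nhdsWithin_le_nhds).isBigO_one ℝ
  have hB1 : B =O[𝓝[≠] α] (1 : ℝ → ℝ) := (hB.tendsto.mono_left nhdsWithin_le_nhds).isBigO_one ℝ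
  exact hA1.add ((hB1.mul hμ).congr_right fun _ => mul_one _)

theorem tendsto_one_add_pow_mul {M : ℝ → ℝ} {α : ℝ} {k : ℕ} (hk : k ≠ 0)
    (hM : M =O[𝓝[≠] α] (1 : ℝ → ℝ)) :
    Tendsto (fun x => 1 + (x - α) ^ k * M x) (𝓝[≠] α) (𝓝 1) := by
  have hpow : ContinuousAt (fun x => (x - α) ^ k) α := by fun_prop
  have hpow0 : (fun x => (x - α) ^ k) =o[𝓝[≠] α] (1 : ℝ → ℝ) :=
    (isLittleO_one_iff ℝ).2 (by simpa [hk] using hpow.tendsto.mono_left nhdsWithin_le_nhds)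
  have hmul : (fun x => (x - α) ^ k * M x) =o[𝓝[≠] α] fun _ => (1 : ℝ) := by
    simpa using hpow0.mul_isBigO hM
  simpa using ((isLittleO_one_iff ℝ).1 hmul).const_add 1

theorem exists_bound_hermiteDeriv {f : ℝ → ℝ} {α : ℝ} (hf : ContDiffAt ℝ 5 f α) :
    ∃ C ≥ 0, ∀ᶠ x in 𝓝 α, ∀ y z, |y - α| < |x - α| → |z - α| < |x - α| → y ≠ z →
      ∃ μ, |μ| ≤ C ∧ hermiteDeriv f x y z =
        deriv f z - (iteratedDeriv 4 f α / 4! + (x - α) * μ) * ((z - x) ^ 2 * (z - y)) := by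
  have hdiff : DifferentiableAt ℝ (iteratedDeriv 4 f) α := by
    rw [iteratedDeriv_eq_equiv_comp, LinearIsometryEquiv.comp_differentiableAt_iff]
    exact hf.differentiableAt_iteratedFDeriv (by norm_num)
  obtain ⟨C, hC, hlip⟩ := hdiff.isBigO_sub.exists_nonneg
  obtain ⟨δ, hδ, hball⟩ := Metric.eventually_nhds_iff.1
    (hlip.bound.and ((hf.of_le (m := 4) (by norm_num)).eventually (by simp)))
  refine ⟨C / 4!, by positivity, ?_⟩
  filter_upwards [Metric.ball_mem_nhds α hδ] with x hx y z hy hz hyz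
  have he : 0 < |x - α| := (abs_nonneg _).trans_lt hy
  have hxα : x - α ≠ 0 := abs_pos.1 he
  obtain ⟨ξ, hξ, hherm⟩ := exists_hermiteDeriv_eq (s := Metric.closedBall α |x - α|)
    (convex_closedBall _ _).ordConnected
    (fun t ht => (hball (lt_of_le_of_lt (Metric.mem_closedBall.1 ht) hx)).2)
    (Metric.mem_closedBall.2 le_rfl) (Metric.mem_closedBall.2 hy.le)
    (Metric.mem_closedBall.2 hz.le) (fun h => hy.ne (by rw [h])) (fun h => hz.ne (by rw [h])) hyz
  have hξlip : |iteratedDeriv 4 f ξ - iteratedDeriv 4 f α| ≤ C * |x - α| :=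
    (hball (lt_of_le_of_lt (Metric.mem_closedBall.1 hξ) hx)).1.trans
      (mul_le_mul_of_nonneg_left (Metric.mem_closedBall.1 hξ) hC)
  refine ⟨(iteratedDeriv 4 f ξ - iteratedDeriv 4 f α) / (4! * (x - α)), ?_, ?_⟩
  · rw [abs_div, abs_mul, Nat.abs_cast, div_le_div_iff₀ (by positivity) (by positivity)]
    linear_combination (4! : ℝ) * hξlip
  · rw [hherm]
    field_simp
    ring

theorem abs_sub_lt_of_sub_eq_mul {x p α t : ℝ} (hx : x ≠ α) (hp : p - α = (x - α) * t)
    (ht : |t| < 1) : |p - α| < |x - α| := by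
  rw [hp, abs_mul]
  exact mul_lt_of_lt_one_right (abs_pos.2 (sub_ne_zero.2 hx)) ht

theorem eventually_abs_kungStep_sub_lt {f : ℝ → ℝ} {α : ℝ} {W V : ℝ → ℝ}
    (hW : ContinuousAt W α) (hV : ContinuousAt V α)
    (hy : ∀ᶠ x in 𝓝 α, newtonStep f x - α = (x - α) ^ 2 * W x)
    (hz : ∀ᶠ x in 𝓝 α, kungStep f x - α = (newtonStep f x - α) * ((x - α) ^ 2 * V x)) :
    ∀ᶠ x in 𝓝[≠] α, kungStep f x ≠ α →
      |kungStep f x - α| < |newtonStep f x - α| ∧ |newtonStep f x - α| < |x - α| := by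
  have hsmall {t : ℝ → ℝ} (ht : ContinuousAt t α) (ht0 : t α = 0) : ∀ᶠ x in 𝓝 α, |t x| < 1 :=
    ht.abs.eventually_lt_const (by simp [ht0])
  have hWsmall := hsmall (t := fun x => (x - α) * W x) (by fun_prop) (by simp)
  have hVsmall := hsmall (t := fun x => (x - α) ^ 2 * V x) (by fun_prop) (by simp)
  refine eventually_nhdsWithin_iff.2 ?_
  filter_upwards [hy, hz, hWsmall, hVsmall] with x hyx hzx hWx hVx hx hzα
  have hyα : newtonStep f x ≠ α := fun h => hzα (sub_eq_zero.1 (by rw [hzx, h]; ring))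
  exact ⟨abs_sub_lt_of_sub_eq_mul hyα hzx hVx,
    abs_sub_lt_of_sub_eq_mul hx (by rw [hyx]; ring) hWx⟩

theorem exists_hermiteDerivApprox_eq {f : ℝ → ℝ} {α : ℝ} (hf : ContDiffAt ℝ 5 f α) {W V : ℝ → ℝ}
    (hW : ContinuousAt W α) (hV : ContinuousAt V α)
    (hy : ∀ᶠ x in 𝓝 α, newtonStep f x - α = (x - α) ^ 2 * W x)
    (hz : ∀ᶠ x in 𝓝 α, kungStep f x - α = (newtonStep f x - α) * ((x - α) ^ 2 * V x)) :
    ∃ μ : ℝ → ℝ, μ =O[𝓝[≠] α] (1 : ℝ → ℝ) ∧ ∀ᶠ x in 𝓝[≠] α, kungStep f x ≠ α →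
      hermiteDerivApprox f x = deriv f (kungStep f x) -
        (iteratedDeriv 4 f α / 4! + (x - α) * μ x) *
          ((kungStep f x - x) ^ 2 * (kungStep f x - newtonStep f x)) := by
  obtain ⟨C, hC, hherm⟩ := exists_bound_hermiteDeriv hf
  have hex : ∀ᶠ x in 𝓝[≠] α, ∃ μ, |μ| ≤ C ∧ (kungStep f x ≠ α →
      hermiteDerivApprox f x = deriv f (kungStep f x) -
        (iteratedDeriv 4 f α / 4! + (x - α) * μ) *
          ((kungStep f x - x) ^ 2 * (kungStep f x - newtonStep f x))) := by
    filter_upwards [hherm.filter_mono nhdsWithin_le_nhds,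
      eventually_abs_kungStep_sub_lt hW hV hy hz] with x hx hlt
    rcases eq_or_ne (kungStep f x) α with hzα | hzα
    · exact ⟨0, by simpa using hC, fun h => absurd hzα h⟩
    · obtain ⟨hzy, hyx⟩ := hlt hzα
      obtain ⟨μ, hμ, heq⟩ := hx _ _ hyx (hzy.trans hyx) (fun h => hzy.ne (by rw [h]))
      exact ⟨μ, hμ, fun _ => heq⟩
  obtain ⟨μ, hμ⟩ := hex.choice
  exact ⟨μ, .of_bound C (hμ.mono fun x hx => by simpa using hx.1), hμ.mono fun x hx => hx.2⟩

theorem mul_sub_div_sub_eq {z α a M D fz c k : ℝ} (ha : a ≠ 0) (hM : 1 + M ≠ 0)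
    (hD : z ≠ α → D = a * (1 + M))
    (hfz : fz = a * ((z - α) * (1 + c * (z - α) + (z - α) ^ 2 * k))) :
    (1 + M) * (z - fz / D - α) = (z - α) * (M - c * (z - α) - (z - α) ^ 2 * k) := by
  rcases eq_or_ne z α with rfl | hz
  -- Here `f z = 0`, so the correction vanishes even though `D` may be a junk value.
  · simp [hfz]
  · rw [hfz, hD hz]
    field_simp
    ring

namespace HasSimpleRootExpansion

variable {f : ℝ → ℝ} {α a c₂ c₃ c₄ : ℝ}

theorem exists_kungStep_sub_and_hermiteDerivApprox_eq (h : HasSimpleRootExpansion f α a c₂ c₃)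
    (hf : ContDiffAt ℝ 5 f α) (hc₄ : iteratedDeriv 4 f α / 4! = a * c₄) :
    ∃ V₁ n : ℝ → ℝ, ContinuousAt V₁ α ∧ n =O[𝓝[≠] α] (1 : ℝ → ℝ) ∧
      (∀ᶠ x in 𝓝 α, kungStep f x - α = (x - α) ^ 4 * (-(c₂ * c₃) + (x - α) * V₁ x)) ∧
      ∀ᶠ x in 𝓝[≠] α, kungStep f x ≠ α → hermiteDerivApprox f x =
        a * (1 + (x - α) ^ 4 * (c₂ * c₄ - 2 * c₂ ^ 2 * c₃ + (x - α) * n x)) := by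
  obtain ⟨w, hw, hy⟩ := h.exists_newtonStep_sub
  set W : ℝ → ℝ := fun x => c₂ + (x - α) * w x with hW
  have hWcont : ContinuousAt W α := by fun_prop
  obtain ⟨v, hv, hz⟩ := h.exists_kungStep_sub hWcont hy
  obtain ⟨μ, hμ, hD⟩ := exists_hermiteDerivApprox_eq hf hWcont
    (V := fun x => -c₃ + (x - α) * v x) (by fun_prop) hy hz
  set V₁ : ℝ → ℝ := fun x => c₂ * v x + w x * (-c₃ + (x - α) * v x) with hV₁
  set V : ℝ → ℝ := fun x => -(c₂ * c₃) + (x - α) * V₁ x with hV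
  have hzV : ∀ᶠ x in 𝓝 α, kungStep f x - α = (x - α) ^ 4 * V x := by
    filter_upwards [hy, hz] with x hyx hzx
    rw [hzx, hyx]
    simp only [hV, hV₁]
    ring
  obtain ⟨r', hr', hf'⟩ := h.exists_deriv_add (u := fun x => (x - α) ^ 4 * V x) (by fun_prop)
    (by simp)
  have ha := h.ne_zero
  set T : ℝ → ℝ := fun x => ((x - α) ^ 3 * V x - 1) ^ 2 * (W x - (x - α) ^ 2 * V x) with hT
  refine ⟨V₁, fun x => 2 * c₂ * V₁ x + (x - α) ^ 3 * V x ^ 2 *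
    (3 * c₃ + (x - α) ^ 4 * V x * r' x) + c₄ * (w x - (x - α) * V x - (x - α) ^ 2 * V x *
      (2 - (x - α) ^ 3 * V x) * (W x - (x - α) ^ 2 * V x)) + T x / a * μ x,
    by fun_prop, isBigO_one_add_mul (by fun_prop) (by fun_prop) hμ, hzV, ?_⟩
  · filter_upwards [hy.filter_mono nhdsWithin_le_nhds, hzV.filter_mono nhdsWithin_le_nhds, hD]
      with x hyx hzx hDx hzα
    have hzx' : kungStep f x - x = (x - α) * ((x - α) ^ 3 * V x - 1) := by
      linear_combination hzx
    have hzy : kungStep f x - newtonStep f x = (x - α) ^ 2 * ((x - α) ^ 2 * V x - W x) := by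
      linear_combination hzx - hyx
    rw [hDx hzα, hzx', hzy, eq_add_of_sub_eq' hzx, hf', hc₄]
    simp only [hT, hV, hW]
    generalize x - α = e
    field_simp
    ring

theorem exists_mul_eighthOrderStep_error_eq (h : HasSimpleRootExpansion f α a c₂ c₃)
    (hf : ContDiffAt ℝ 5 f α) (hc₄ : iteratedDeriv 4 f α / 4! = a * c₄) :
    ∃ M N : ℝ → ℝ, M =O[𝓝[≠] α] (1 : ℝ → ℝ) ∧ N =O[𝓝[≠] α] (1 : ℝ → ℝ) ∧ ∀ᶠ x in 𝓝[≠] α,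
      (1 + (x - α) ^ 4 * M x) * (eighthOrderStep f x - α -
        (c₂ ^ 3 * c₃ ^ 2 - c₂ ^ 2 * c₃ * c₄) * (x - α) ^ 8) = N x * (x - α) ^ 9 := by
  obtain ⟨V₁, n, hV₁, hn, hz, hD⟩ := h.exists_kungStep_sub_and_hermiteDerivApprox_eq hf hc₄
  set V : ℝ → ℝ := fun x => -(c₂ * c₃) + (x - α) * V₁ x with hV
  obtain ⟨r, hr, hfz⟩ := h.exists_apply_add (u := fun x => (x - α) ^ 4 * V x) (by fun_prop)
    (by simp)
  set K : ℝ := c₂ ^ 3 * c₃ ^ 2 - c₂ ^ 2 * c₃ * c₄ with hK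
  set M : ℝ → ℝ := fun x => c₂ * c₄ - 2 * c₂ ^ 2 * c₃ + (x - α) * n x with hM
  set k : ℝ → ℝ := fun x => c₃ + (x - α) ^ 4 * V x * r x with hk
  have hMbound : M =O[𝓝[≠] α] (1 : ℝ → ℝ) := isBigO_one_add_mul (by fun_prop) (by fun_prop) hn
  refine ⟨M, fun x => V₁ x * (c₂ * c₄ - c₂ ^ 2 * c₃) - c₂ * V x * V₁ x -
    (x - α) ^ 3 * V x ^ 3 * k x - K * (x - α) ^ 3 * (c₂ * c₄ - 2 * c₂ ^ 2 * c₃) +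
      (V x - K * (x - α) ^ 4) * n x,
    hMbound, isBigO_one_add_mul (by fun_prop) (by fun_prop) hn, ?_⟩
  filter_upwards [hz.filter_mono nhdsWithin_le_nhds, hD,
    (tendsto_one_add_pow_mul four_ne_zero hMbound).eventually_ne one_ne_zero] with x hzx hDx hMx
  replace hzx : kungStep f x - α = (x - α) ^ 4 * V x := hzx
  have hfzx : f (kungStep f x) = a * ((kungStep f x - α) *
      (1 + c₂ * (kungStep f x - α) + (kungStep f x - α) ^ 2 * k x)) := by
    rw [eq_add_of_sub_eq' hzx, hfz, add_sub_cancel_left]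
    simp only [hk]
    ring
  have hstep := mul_sub_div_sub_eq h.ne_zero hMx hDx hfzx
  rw [eighthOrderStep, mul_sub, hstep, hzx]
  simp only [hM, hK, hV]
  generalize x - α = e
  ring

theorem eighthOrderStep_isBigO (h : HasSimpleRootExpansion f α a c₂ c₃)
    (hf : ContDiffAt ℝ 5 f α) (hc₄ : iteratedDeriv 4 f α / 4! = a * c₄) :
    (fun x => eighthOrderStep f x - α - (c₂ ^ 3 * c₃ ^ 2 - c₂ ^ 2 * c₃ * c₄) * (x - α) ^ 8)
      =O[𝓝[≠] α] fun x => (x - α) ^ 9 := by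
  obtain ⟨M, N, hM, hN, herror⟩ := h.exists_mul_eighthOrderStep_error_eq hf hc₄
  have hlim := tendsto_one_add_pow_mul four_ne_zero hM
  have hinv : (fun x => (1 + (x - α) ^ 4 * M x)⁻¹) =O[𝓝[≠] α] (1 : ℝ → ℝ) :=
    (hlim.inv₀ one_ne_zero).isBigO_one ℝ
  refine ((hinv.mul hN).mul (isBigO_refl (fun x => (x - α) ^ 9) _)).congr' ?_ (by simp)
  filter_upwards [herror, hlim.eventually_ne one_ne_zero] with x hx hne
  rw [mul_assoc, ← hx, inv_mul_cancel_left₀ hne]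

end HasSimpleRootExpansion

theorem eighthOrderStep_error_expansion_general (f : ℝ → ℝ) (α : ℝ) (hf : ContDiffAt ℝ 5 f α)
    (hroot : f α = 0) (hsimple : deriv f α ≠ 0)
    (c₂ c₃ c₄ : ℝ)
    (hc₂ : c₂ = iteratedDeriv 2 f α / (2 * deriv f α))
    (hc₃ : c₃ = iteratedDeriv 3 f α / (6 * deriv f α))
    (hc₄ : c₄ = iteratedDeriv 4 f α / (24 * deriv f α)) :
    (fun x => eighthOrderStep f x - α -
        (c₂ ^ 3 * c₃ ^ 2 - c₂ ^ 2 * c₃ * c₄) * (x - α) ^ 8)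
      =O[𝓝[≠] α] fun x => (x - α) ^ 9 := by
  have h := hasSimpleRootExpansion_of_contDiffAt (hf.of_le (by norm_num)) hroot hsimple
  rw [← hc₂, ← hc₃] at h
  refine h.eighthOrderStep_isBigO hf ?_
  have hfact : ((4! : ℕ) : ℝ) = 24 := by norm_num [Nat.factorial]
  rw [hc₄, hfact]
  field_simp

theorem eighthOrderStep_error_expansion (f : ℝ → ℝ) (α : ℝ)
    (hf : ∃ s ∈ 𝓝 α, ContDiffOn ℝ (⊤ : ℕ∞) f s)
    (hroot : f α = 0) (hsimple : deriv f α ≠ 0)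
    (c₂ c₃ c₄ : ℝ)
    (hc₂ : c₂ = iteratedDeriv 2 f α / (2 * deriv f α))
    (hc₃ : c₃ = iteratedDeriv 3 f α / (6 * deriv f α))
    (hc₄ : c₄ = iteratedDeriv 4 f α / (24 * deriv f α)) :
    (fun x => eighthOrderStep f x - α -
        (c₂ ^ 3 * c₃ ^ 2 - c₂ ^ 2 * c₃ * c₄) * (x - α) ^ 8)
      =O[𝓝[≠] α] fun x => (x - α) ^ 9 := by
  obtain ⟨s, hs, hfs⟩ := hf
  exact eighthOrderStep_error_expansion_general f α
    ((hfs.contDiffAt hs).of_le (by norm_cast)) hroot hsimple c₂ c₃ c₄ hc₂ hc₃ hc₄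
end
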